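/- Let G be a graph on vertices {1,…,t} with edge set E. Then the dual cone of SDD^G satisfies (SDD^G)* = {Q ∈ S^t : ι_{ij}*(Q) ⪰ 0 for all {i,j} ∈ E}, where ι_{ij}*(Q) is the 2×2 submatrix of Q formed by rows and columns i and j. -/

import Mathlib

open Matrix Set

noncomputable section

/-- The embedding `ι_{ij} : S² → Sⁿ` placing a 2×2 symmetric matrix into
rows/columns `i, j` with zeros elsewhere. -/
def iota {n : ℕ} (i j : Fin n) (S : Matrix (Fin 2) (Fin 2) ℝ) :
    Matrix (Fin n) (Fin n) ℝ :=
  Matrix.of fun r s =>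
    (if r = i ∧ s = i then S 0 0 else 0) +
    (if r = i ∧ s = j then S 0 1 else 0) +
    (if r = j ∧ s = i then S 1 0 else 0) +
    (if r = j ∧ s = j then S 1 1 else 0)

/-- The cone `SDDⁿ = Σ_{i<j} ι_{ij}(S²₊)` of scaled diagonally dominant matrices. -/
def SDD (n : ℕ) : Set (Matrix (Fin n) (Fin n) ℝ) :=
  {X | ∃ S : Fin n → Fin n → Matrix (Fin 2) (Fin 2) ℝ,
    (∀ i j : Fin n, (S i j).PosSemidef) ∧
    X = ∑ i : Fin n, ∑ j : Fin n, if i < j then iota i j (S i j) else 0}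

/-- `Nⁿ`: symmetric entrywise nonnegative matrices. -/
def NonnegMat (n : ℕ) : Set (Matrix (Fin n) (Fin n) ℝ) :=
  {X | X.IsSymm ∧ ∀ i j, 0 ≤ X i j}

/-- Dual cone within the space of symmetric matrices, w.r.t. the trace inner product. -/
def dualCone {n : ℕ} (C : Set (Matrix (Fin n) (Fin n) ℝ)) :
    Set (Matrix (Fin n) (Fin n) ℝ) :=
  {Y | Y.IsSymm ∧ ∀ X ∈ C, 0 ≤ (X * Y).trace}

open scoped Classical in
/-- `SDD^G = Σ_{{i,j}∈E} ι_{ij}(S²₊)` (equal to `{0}` if `E = ∅`). -/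
def SDDG {t : ℕ} (G : SimpleGraph (Fin t)) : Set (Matrix (Fin t) (Fin t) ℝ) :=
  {X | ∃ S : Fin t → Fin t → Matrix (Fin 2) (Fin 2) ℝ,
    (∀ i j : Fin t, (S i j).PosSemidef) ∧
    X = ∑ i : Fin t, ∑ j : Fin t, if i < j ∧ G.Adj i j then iota i j (S i j) else 0}

/-- `SDD^G₊ = SDD^G ∩ Nᵗ`. -/
def SDDGplus {t : ℕ} (G : SimpleGraph (Fin t)) : Set (Matrix (Fin t) (Fin t) ℝ) :=
  SDDG G ∩ NonnegMat t

/-- `SDD^G₊(U) = Uᵀ (SDD^G₊) U`. -/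
def SDDGplusU {t n : ℕ} (G : SimpleGraph (Fin t)) (U : Matrix (Fin t) (Fin n) ℝ) :
    Set (Matrix (Fin n) (Fin n) ℝ) :=
  {X | ∃ Y ∈ SDDGplus G, X = Uᵀ * Y * U}

/-- `seg(G,U) = ∪_{{i,j}∈E} [uᵢ, uⱼ]`. -/
def seg {t n : ℕ} (G : SimpleGraph (Fin t)) (U : Matrix (Fin t) (Fin n) ℝ) :
    Set (Fin n → ℝ) :=
  {v | ∃ i j : Fin t, G.Adj i j ∧ v ∈ segment ℝ (U i) (U j)}

/-- `ι_{ij}` is adjoint to taking the `2 × 2` block in rows and columns `i, j`. -/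
theorem trace_iota_mul {n : ℕ} (i j : Fin n) (S : Matrix (Fin 2) (Fin 2) ℝ)
    (Q : Matrix (Fin n) (Fin n) ℝ) :
    (iota i j S * Q).trace = (S * !![Q i i, Q i j; Q j i, Q j j]).trace := by
  simp only [Matrix.trace, Matrix.diag_apply, Matrix.mul_apply, iota, Matrix.of_apply, add_mul,
    ite_mul, zero_mul, Finset.sum_add_distrib, ite_and]
  simp [Finset.sum_ite_irrel]
  ring

theorem Matrix.PosSemidef.trace_mul_nonneg {n : Type*} [Fintype n] {A B : Matrix n n ℝ}
    (hA : A.PosSemidef) (hB : B.PosSemidef) : 0 ≤ (A * B).trace := by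
  obtain ⟨m, v, rfl⟩ := Matrix.posSemidef_iff_eq_sum_vecMulVec.mp hA
  rw [Finset.sum_mul, Matrix.trace_sum]
  refine Finset.sum_nonneg fun k _ => ?_
  rw [Matrix.trace_mul_comm, Matrix.mul_vecMulVec, Matrix.trace_vecMulVec, dotProduct_comm]
  exact hB.dotProduct_mulVec_nonneg _

theorem Matrix.PosSemidef.of_trace_mul_nonneg {n : Type*} [Fintype n] {B : Matrix n n ℝ}
    (hB : B.IsHermitian) (h : ∀ A : Matrix n n ℝ, A.PosSemidef → 0 ≤ (A * B).trace) :
    B.PosSemidef := by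
  refine .of_dotProduct_mulVec_nonneg hB fun x => ?_
  have hx := h _ (Matrix.posSemidef_vecMulVec_self_star x)
  rwa [Matrix.trace_mul_comm, Matrix.mul_vecMulVec, Matrix.trace_vecMulVec,
    dotProduct_comm] at hx

theorem iota_swap {n : ℕ} (i j : Fin n) (S : Matrix (Fin 2) (Fin 2) ℝ) :
    iota j i S = iota i j (S.submatrix (Equiv.swap 0 1) (Equiv.swap 0 1)) := by
  ext r s
  simp only [iota, Matrix.of_apply, Matrix.submatrix_apply, Equiv.swap_apply_left,
    Equiv.swap_apply_right]
  ring

theorem iota_zero {n : ℕ} (i j : Fin n) : iota i j 0 = 0 := by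
  ext r s
  simp [iota]

theorem iota_mem_SDDG_of_lt {t : ℕ} {G : SimpleGraph (Fin t)} {i j : Fin t} (hij : i < j)
    (hadj : G.Adj i j) {S : Matrix (Fin 2) (Fin 2) ℝ} (hS : S.PosSemidef) :
    iota i j S ∈ SDDG G := by
  classical
  refine ⟨fun k l => if k = i ∧ l = j then S else 0, fun k l => ?_, ?_⟩
  · dsimp only
    split_ifs
    exacts [hS, .zero]
  · rw [Finset.sum_eq_single i, Finset.sum_eq_single j]
    · simp [hij, hadj]
    · intro l _ hl
      simp [hl, iota_zero]
    · simp
    · intro k _ hk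
      simp [hk, iota_zero]
    · simp

theorem iota_mem_SDDG {t : ℕ} {G : SimpleGraph (Fin t)} {i j : Fin t} (hadj : G.Adj i j)
    {S : Matrix (Fin 2) (Fin 2) ℝ} (hS : S.PosSemidef) : iota i j S ∈ SDDG G := by
  rcases lt_or_gt_of_ne hadj.ne with hij | hji
  · exact iota_mem_SDDG_of_lt hij hadj hS
  · rw [iota_swap]
    exact iota_mem_SDDG_of_lt hji hadj.symm (hS.submatrix _)

/-- `(SDD^G)* = {Q ∈ Sᵗ : ι_{ij}*(Q) ⪰ 0 for all {i,j} ∈ E}`. -/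
theorem dual_SDDG {t : ℕ} (G : SimpleGraph (Fin t)) :
    dualCone (SDDG G) =
      {Q | Q.IsSymm ∧ ∀ i j : Fin t, G.Adj i j →
        (!![Q i i, Q i j; Q j i, Q j j]).PosSemidef} := by
  ext Q
  refine and_congr_right fun hQ => ⟨fun h i j hadj => ?_, ?_⟩
  · refine .of_trace_mul_nonneg ?_ fun S hS => ?_
    · ext a b
      fin_cases a <;> fin_cases b <;> simp [hQ.apply]
    · rw [← trace_iota_mul]
      exact h _ (iota_mem_SDDG hadj hS)
  · rintro h X ⟨S, hS, rfl⟩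
    simp only [Finset.sum_mul, Matrix.trace_sum]
    refine Finset.sum_nonneg fun i _ => Finset.sum_nonneg fun j _ => ?_
    split_ifs with hij
    · rw [trace_iota_mul]
      exact (hS i j).trace_mul_nonneg (h i j hij.2)
    · simp

end
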